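/- Let X be a δ-hyperbolic geodesic space and Y a geodesic metric space. If M ≥ M₁(δ,λ,c) and q : Y → X is an (M,λ,c)-local-quasi-isometric embedding (its restriction to every ball of radius M is a (λ,c)-quasi-isometric embedding), then q is a (λ',c')-quasi-isometric embedding globally, where λ', c' depend only on δ, λ, c. -/

import Mathlib

open Set

/-- `s` is (the image of) a geodesic segment from `x` to `y`. -/
def IsGeodesicSegment {X : Type} [MetricSpace X] (x y : X) (s : Set X) : Prop :=
  ∃ γ : ℝ → X, γ 0 = x ∧ γ (dist x y) = y ∧
    (∀ t ∈ Icc (0:ℝ) (dist x y), ∀ t' ∈ Icc (0:ℝ) (dist x y),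
      dist (γ t) (γ t') = |t - t'|) ∧
    s = γ '' Icc 0 (dist x y)

/-- A geodesic metric space: any two points are joined by a geodesic segment. -/
def GeodesicSpace (X : Type) [MetricSpace X] : Prop :=
  ∀ x y : X, ∃ s, IsGeodesicSegment x y s

/-- `δ`-hyperbolicity (thin triangles): a geodesic space in which each side of every
geodesic triangle lies in the `δ`-neighborhood of the union of the other two sides. -/
def DeltaHyperbolic (X : Type) [MetricSpace X] (δ : ℝ) : Prop :=
  GeodesicSpace X ∧
  ∀ (x y z : X) (s₁ s₂ s₃ : Set X),
    IsGeodesicSegment x y s₁ → IsGeodesicSegment y z s₂ → IsGeodesicSegment z x s₃ →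
    ∀ p ∈ s₁, ∃ q ∈ s₂ ∪ s₃, dist p q ≤ δ

/-- `q` is a `(λ,c)`-quasi-geodesic on the set `I ⊆ ℝ`. -/
def QuasiGeodesicOn {X : Type} [MetricSpace X] (q : ℝ → X) (I : Set ℝ) (lam c : ℝ) : Prop :=
  ∀ t ∈ I, ∀ t' ∈ I,
    lam⁻¹ * |t - t'| - c ≤ dist (q t) (q t') ∧ dist (q t) (q t') ≤ lam * |t - t'| + c

/-- `q` is an `(M,λ,c)`-local-quasi-geodesic on `I`: its restriction to every
subinterval of length at most `M` is a `(λ,c)`-quasi-geodesic. -/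
def LocalQuasiGeodesicOn {X : Type} [MetricSpace X] (q : ℝ → X) (I : Set ℝ)
    (M lam c : ℝ) : Prop :=
  ∀ a b : ℝ, a ∈ I → b ∈ I → a ≤ b → b - a ≤ M →
    QuasiGeodesicOn q (I ∩ Icc a b) lam c

/-- `q : Y → X` is a `(λ,c)`-quasi-isometric embedding. -/
def QIEmbedding {Y X : Type} [MetricSpace Y] [MetricSpace X] (q : Y → X)
    (lam c : ℝ) : Prop :=
  ∀ y₁ y₂ : Y,
    lam⁻¹ * dist y₁ y₂ - c ≤ dist (q y₁) (q y₂) ∧ dist (q y₁) (q y₂) ≤ lam * dist y₁ y₂ + c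

/-!
Sampling a `(λ,c)`-quasi-geodesic of length at most `2 ^ k` in `2 ^ k` steps shows that it stays
within distance `O(k)` of any geodesic joining its endpoints, whereas those endpoints may be at
distance of order `2 ^ k`. So at a suitable scale a local quasi-geodesic breaks into long pieces
whose Gromov products at the break points are small, and by Gromov's four-point inequality such a
broken path never turns back: every piece adds to the distance from the start. For a map from a
geodesic space, apply this to the images of geodesics.
-/

namespace IsGeodesicSegment

variable {X : Type} [MetricSpace X] {x y : X} {s : Set X}

theorem symm (h : IsGeodesicSegment x y s) : IsGeodesicSegment y x s := by
  obtain ⟨γ, hx, hy, hγ, rfl⟩ := h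
  have hmem : ∀ t ∈ Icc 0 (dist x y), dist x y - t ∈ Icc 0 (dist x y) :=
    fun t ht => ⟨sub_nonneg.2 ht.2, sub_le_self _ ht.1⟩
  rw [IsGeodesicSegment, dist_comm y x]
  refine ⟨fun t => γ (dist x y - t), by simpa using hy, by simpa using hx, ?_, ?_⟩
  · intro t ht t' ht'
    rw [hγ _ (hmem t ht) _ (hmem t' ht'), sub_sub_sub_cancel_left, abs_sub_comm]
  · ext p
    constructor
    · rintro ⟨t, ht, rfl⟩
      exact ⟨dist x y - t, hmem t ht, by simp⟩
    · rintro ⟨t, ht, rfl⟩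
      exact ⟨dist x y - t, hmem t ht, rfl⟩

theorem left_mem (h : IsGeodesicSegment x y s) : x ∈ s := by
  obtain ⟨γ, hx, -, -, rfl⟩ := h
  exact ⟨0, left_mem_Icc.2 dist_nonneg, hx⟩

theorem right_mem (h : IsGeodesicSegment x y s) : y ∈ s :=
  h.symm.left_mem

theorem dist_add_dist (h : IsGeodesicSegment x y s) {p : X} (hp : p ∈ s) :
    dist x p + dist p y = dist x y := by
  obtain ⟨γ, hx, hy, hγ, rfl⟩ := h
  obtain ⟨t, ht, rfl⟩ := hp
  have hleft := hγ 0 (left_mem_Icc.2 dist_nonneg) t ht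
  have hright := hγ t ht _ (right_mem_Icc.2 dist_nonneg)
  rw [hx, abs_sub_comm, sub_zero, abs_of_nonneg ht.1] at hleft
  rw [hy, abs_sub_comm, abs_of_nonneg (sub_nonneg.2 ht.2)] at hright
  rw [hleft, hright, add_sub_cancel]

theorem isPreconnected (h : IsGeodesicSegment x y s) : IsPreconnected s := by
  obtain ⟨γ, -, -, hγ, rfl⟩ := h
  have hlip : LipschitzOnWith 1 γ (Icc 0 (dist x y)) :=
    LipschitzOnWith.of_dist_le_mul fun t ht t' ht' => by
      rw [hγ t ht t' ht', Real.dist_eq, NNReal.coe_one, one_mul]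
  exact isPreconnected_Icc.image _ hlip.continuousOn

end IsGeodesicSegment

section GromovProduct

variable {X : Type*} [PseudoMetricSpace X]

/-- The Gromov product `(x | y)_w` of `x` and `y` based at `w`: in a hyperbolic space, roughly the
distance from `w` to a geodesic from `x` to `y`. -/
noncomputable def gromovProduct (x y w : X) : ℝ :=
  (dist x w + dist y w - dist x y) / 2

theorem gromovProduct_comm (x y w : X) : gromovProduct x y w = gromovProduct y x w := by
  rw [gromovProduct, gromovProduct, dist_comm x y, add_comm (dist x w)]

theorem gromovProduct_self_left (x y : X) : gromovProduct x y x = 0 := by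
  rw [gromovProduct, dist_self, dist_comm y x, zero_add, sub_self, zero_div]

theorem gromovProduct_add_gromovProduct (x y z : X) :
    gromovProduct x y z + gromovProduct x z y = dist y z := by
  rw [gromovProduct, gromovProduct, dist_comm z y]
  ring

theorem dist_eq_add_sub_gromovProduct (x y z : X) :
    dist x z = dist x y + dist y z - 2 * gromovProduct x z y := by
  rw [gromovProduct, dist_comm z y]
  ring

end GromovProduct

theorem IsGeodesicSegment.gromovProduct_le_dist {X : Type} [MetricSpace X] {x y p : X} {s : Set X}
    (h : IsGeodesicSegment x y s) (hp : p ∈ s) (w : X) : gromovProduct x y w ≤ dist p w := by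
  have hxy := h.dist_add_dist hp
  have hx := dist_triangle x p w
  have hy := dist_triangle_left y w p
  rw [gromovProduct]
  linarith

theorem exists_natCast_mul_eq_of_le {R : Type*} [Field R] [LinearOrder R] [IsStrictOrderedRing R]
    [FloorSemiring R] {N L : R} (hN : 0 < N) (hL : N ≤ L) :
    ∃ (m : ℕ) (h : R), N ≤ h ∧ h ≤ 2 * N ∧ m * h = L := by
  have hm1 : (1 : R) ≤ ⌊L / N⌋₊ := by
    exact_mod_cast Nat.le_floor (by rwa [Nat.cast_one, one_le_div hN])
  have hlow : ⌊L / N⌋₊ * N ≤ L :=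
    (le_div_iff₀ hN).1 (Nat.floor_le (div_nonneg (hN.le.trans hL) hN.le))
  have hup : L ≤ (⌊L / N⌋₊ + 1) * N := ((div_lt_iff₀ hN).1 (Nat.lt_floor_add_one _)).le
  refine ⟨⌊L / N⌋₊, L / ⌊L / N⌋₊, ?_, ?_, mul_div_cancel₀ _ (by positivity)⟩
  · rwa [le_div_iff₀' (by positivity)]
  · rw [div_le_iff₀' (by positivity)]
    nlinarith

theorem Icc_add_natCast_mul_subset {R : Type*} [Semiring R] [PartialOrder R] [IsOrderedRing R]
    (a : R) {h : R} (hh : 0 ≤ h) (i : ℕ) {j m : ℕ} (hj : j ≤ m) :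
    Icc (a + i * h) (a + j * h) ⊆ Icc a (a + m * h) :=
  Icc_subset_Icc (le_add_of_nonneg_right (by positivity)) (by gcongr)

section QuasiGeodesic

variable {X : Type} [MetricSpace X] {f : ℝ → X} {I : Set ℝ} {a b h lam c M : ℝ} {m : ℕ}

theorem quasiGeodesicOn_iff :
    QuasiGeodesicOn f I lam c ↔ ∀ t ∈ I, ∀ t' ∈ I, t ≤ t' →
      lam⁻¹ * (t' - t) - c ≤ dist (f t) (f t') ∧ dist (f t) (f t') ≤ lam * (t' - t) + c := by
  constructor
  · intro hf t ht t' ht' h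
    simpa only [abs_sub_comm t, abs_of_nonneg (sub_nonneg.2 h)] using hf t ht t' ht'
  · intro hf t ht t' ht'
    rcases le_total t t' with h | h
    · simpa only [abs_sub_comm t, abs_of_nonneg (sub_nonneg.2 h)] using hf t ht t' ht' h
    · simpa only [dist_comm (f t), abs_of_nonneg (sub_nonneg.2 h)] using hf t' ht' t ht h

theorem LocalQuasiGeodesicOn.quasiGeodesicOn_Icc (hf : LocalQuasiGeodesicOn f I M lam c)
    (hI : Icc a b ⊆ I) (hM : b - a ≤ M) : QuasiGeodesicOn f (Icc a b) lam c := by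
  rcases le_or_gt a b with hab | hab
  · simpa only [inter_eq_right.2 hI] using
      hf a b (hI (left_mem_Icc.2 hab)) (hI (right_mem_Icc.2 hab)) hab hM
  · simp [QuasiGeodesicOn, Icc_eq_empty_of_lt hab]

theorem LocalQuasiGeodesicOn.mono {I' : Set ℝ} {M' : ℝ} (hf : LocalQuasiGeodesicOn f I M lam c)
    (hI : I' ⊆ I) (hM : M' ≤ M) : LocalQuasiGeodesicOn f I' M' lam c :=
  fun a b ha hb hab hlen t ht t' ht' =>
    hf a b (hI ha) (hI hb) hab (hlen.trans hM) t ⟨hI ht.1, ht.2⟩ t' ⟨hI ht'.1, ht'.2⟩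

theorem QuasiGeodesicOn.localQuasiGeodesicOn (hf : QuasiGeodesicOn f I lam c) (M : ℝ) :
    LocalQuasiGeodesicOn f I M lam c :=
  fun _ _ _ _ _ _ t ht t' ht' => hf t ht.1 t' ht'.1

theorem LocalQuasiGeodesicOn.dist_step (hf : LocalQuasiGeodesicOn f (Icc a (a + m * h)) M lam c)
    (hh : 0 ≤ h) (hM : h ≤ M) {i : ℕ} (hi : i < m) :
    lam⁻¹ * h - c ≤ dist (f (a + i * h)) (f (a + (i + 1 : ℕ) * h)) ∧
      dist (f (a + i * h)) (f (a + (i + 1 : ℕ) * h)) ≤ lam * h + c := by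
  have hlen : a + (i + 1 : ℕ) * h - (a + i * h) = h := by push_cast; ring
  have hle : a + i * h ≤ a + (i + 1 : ℕ) * h := by linarith
  have hpiece := quasiGeodesicOn_iff.1
    (hf.quasiGeodesicOn_Icc (Icc_add_natCast_mul_subset a hh i hi) (hlen.trans_le hM))
    _ (left_mem_Icc.2 hle) _ (right_mem_Icc.2 hle) hle
  rwa [hlen] at hpiece

theorem LocalQuasiGeodesicOn.dist_le (hf : LocalQuasiGeodesicOn f (Icc a b) M lam c)
    (hab : a ≤ b) (hM : 0 < M) : dist (f a) (f b) ≤ lam * (b - a) + (⌊(b - a) / M⌋₊ + 1) * c := by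
  set m : ℕ := ⌊(b - a) / M⌋₊ + 1 with hm
  set h : ℝ := (b - a) / m with hh
  have hm0 : (0 : ℝ) < m := by positivity
  have hb : b = a + m * h := by rw [hh, mul_div_cancel₀ _ hm0.ne', add_sub_cancel]
  have hhM : h ≤ M := by
    rw [hh, div_le_iff₀ hm0, mul_comm, ← div_le_iff₀ hM, hm]
    exact_mod_cast (Nat.lt_floor_add_one _).le
  have hh0 : 0 ≤ h := div_nonneg (sub_nonneg.2 hab) hm0.le
  rw [hb] at hf
  calc dist (f a) (f b) = dist (f (a + (0 : ℕ) * h)) (f (a + m * h)) := by simp [← hb]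
    _ ≤ ∑ _ ∈ Finset.range m, (lam * h + c) :=
      dist_le_range_sum_of_dist_le (f := fun i : ℕ => f (a + i * h)) m
        fun hi => (hf.dist_step hh0 hhM hi).2
    _ = lam * (m * h) + m * c := by
      rw [Finset.sum_const, Finset.card_range, nsmul_eq_mul]
      ring
    _ = lam * (b - a) + (⌊(b - a) / M⌋₊ + 1) * c := by
      rw [hh, mul_div_cancel₀ _ hm0.ne', hm, Nat.cast_add_one]

/-- A bound for the distance from a point of a `(lam, c)`-quasi-geodesic to a geodesic with the
same endpoints, when the geodesic lies in the `D`-neighborhood of the quasi-geodesic. -/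
def quasiGeodesicDeviation (lam c D : ℝ) : ℝ :=
  D + (lam * (lam * (2 * D + c)) + c)

theorem quasiGeodesicDeviation_nonneg {D : ℝ} (hlam : 0 ≤ lam) (hc : 0 ≤ c) (hD : 0 ≤ D) :
    0 ≤ quasiGeodesicDeviation lam c D := by
  unfold quasiGeodesicDeviation
  positivity

theorem QuasiGeodesicOn.exists_dist_le_of_subset_thickening {s : Set X} {D t : ℝ}
    (hf : QuasiGeodesicOn f (Icc a b) lam c) (hlam : 0 < lam)
    (hs : IsGeodesicSegment (f a) (f b) s) (hD : s ⊆ Metric.thickening D (f '' Icc a b))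
    (ht : t ∈ Icc a b) : ∃ z ∈ s, dist z (f t) ≤ quasiGeodesicDeviation lam c D := by
  have hD0 : 0 < D := Metric.thickening_nonempty_iff.1 ⟨_, hD hs.left_mem⟩ |>.1
  rw [← Icc_union_Icc_eq_Icc ht.1 ht.2, image_union, Metric.thickening_union] at hD
  -- Since `s` is connected, it has a point close to `f` both before and after `t`.
  obtain ⟨z, hz, hzu, hzv⟩ := hs.isPreconnected _ _ Metric.isOpen_thickening
    Metric.isOpen_thickening hD
    ⟨f a, hs.left_mem, Metric.self_subset_thickening hD0 _ ⟨a, left_mem_Icc.2 ht.1, rfl⟩⟩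
    ⟨f b, hs.right_mem, Metric.self_subset_thickening hD0 _ ⟨b, right_mem_Icc.2 ht.2, rfl⟩⟩
  obtain ⟨_, ⟨u, hu, rfl⟩, hzu⟩ := Metric.mem_thickening_iff.1 hzu
  obtain ⟨_, ⟨v, hv, rfl⟩, hzv⟩ := Metric.mem_thickening_iff.1 hzv
  have hu' : u ∈ Icc a b := ⟨hu.1, hu.2.trans ht.2⟩
  have hv' : v ∈ Icc a b := ⟨ht.1.trans hv.1, hv.2⟩
  rw [quasiGeodesicOn_iff] at hf
  have huv : v - u ≤ lam * (2 * D + c) := by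
    rw [← inv_mul_le_iff₀ hlam]
    linarith [(hf u hu' v hv' (hu.2.trans hv.1)).1, dist_triangle_left (f u) (f v) z]
  have hut : dist (f u) (f t) ≤ lam * (lam * (2 * D + c)) + c :=
    calc dist (f u) (f t) ≤ lam * (t - u) + c := (hf u hu' t ht hu.2).2
      _ ≤ lam * (lam * (2 * D + c)) + c := by gcongr; linarith [hv.1]
  exact ⟨z, hz, (dist_triangle z (f u) (f t)).trans (add_le_add hzu.le hut)⟩

end QuasiGeodesic

namespace DeltaHyperbolic

variable {X : Type} [MetricSpace X] {δ : ℝ}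

theorem nonneg [Nonempty X] (hX : DeltaHyperbolic X δ) : 0 ≤ δ := by
  obtain ⟨x⟩ := ‹Nonempty X›
  obtain ⟨s, hs⟩ := hX.1 x x
  obtain ⟨y, -, hy⟩ := hX.2 x x x s s s hs hs hs x hs.left_mem
  exact dist_nonneg.trans hy

theorem exists_dist_le_gromovProduct_add {x y : X} {s : Set X} {r : ℝ}
    (hX : DeltaHyperbolic X δ) (hs : IsGeodesicSegment x y s) (w : X) (hr : δ < r) :
    ∃ p ∈ s, dist p w ≤ gromovProduct x y w + 2 * r := by
  have : Nonempty X := ⟨w⟩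
  have hr0 : 0 < r := hX.nonneg.trans_lt hr
  obtain ⟨S, hS⟩ := hX.1 w x
  obtain ⟨T, hT⟩ := hX.1 y w
  have hcover : s ⊆ Metric.thickening r T ∪ Metric.thickening r S := by
    intro p hp
    obtain ⟨u, hu, hpu⟩ := hX.2 x y w s T S hs hT hS p hp
    rw [← Metric.thickening_union]
    exact Metric.mem_thickening_iff.2 ⟨u, hu, hpu.trans_lt hr⟩
  obtain ⟨p, hp, hpT, hpS⟩ := hs.isPreconnected _ _ Metric.isOpen_thickening
    Metric.isOpen_thickening hcover
    ⟨y, hs.right_mem, Metric.self_subset_thickening hr0 _ hT.left_mem⟩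
    ⟨x, hs.left_mem, Metric.self_subset_thickening hr0 _ hS.right_mem⟩
  obtain ⟨u, hu, hpu⟩ := Metric.mem_thickening_iff.1 hpS
  obtain ⟨v, hv, hpv⟩ := Metric.mem_thickening_iff.1 hpT
  have hx := hS.gromovProduct_le_dist hu p
  have hy := hT.gromovProduct_le_dist hv p
  have hxy := hs.dist_add_dist hp
  refine ⟨p, hp, ?_⟩
  simp only [gromovProduct, dist_comm _ p, dist_comm w] at hx hy hxy ⊢
  linarith

theorem min_gromovProduct_le (hX : DeltaHyperbolic X δ) (x y z w : X) :
    min (gromovProduct x y w) (gromovProduct y z w) ≤ gromovProduct x z w + 3 * δ := by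
  refine le_of_forall_pos_le_add fun ε hε => ?_
  obtain ⟨s, hs⟩ := hX.1 x z
  obtain ⟨S, hS⟩ := hX.1 y x
  obtain ⟨T, hT⟩ := hX.1 z y
  obtain ⟨p, hp, hpw⟩ := hX.exists_dist_le_gromovProduct_add hs w (r := δ + ε / 2) (by linarith)
  obtain ⟨u, hu, hpu⟩ := hX.2 x z y s T S hs hT hS p hp
  have huw := dist_triangle_left u w p
  rcases hu with hu | hu
  · have := hT.gromovProduct_le_dist hu w
    exact min_le_of_right_le (by rw [gromovProduct_comm]; linarith)
  · have := hS.gromovProduct_le_dist hu w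
    exact min_le_of_left_le (by rw [gromovProduct_comm]; linarith)

theorem exists_dist_le_of_path {r : ℝ} (hX : DeltaHyperbolic X δ) (k : ℕ) (p : ℕ → X)
    (hp : ∀ i < 2 ^ k, dist (p i) (p (i + 1)) ≤ r) {s : Set X}
    (hs : IsGeodesicSegment (p 0) (p (2 ^ k)) s) {z : X} (hz : z ∈ s) :
    ∃ i ≤ 2 ^ k, dist z (p i) ≤ k * δ + r := by
  induction k generalizing p s z with
  | zero =>
    refine ⟨0, Nat.zero_le _, ?_⟩
    have hsum := hs.dist_add_dist hz
    have hstep := hp 0 one_pos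
    rw [pow_zero] at hsum
    rw [zero_add] at hstep
    rw [dist_comm, Nat.cast_zero, zero_mul, zero_add]
    linarith [dist_nonneg (x := z) (y := p 1)]
  | succ k ih =>
    have hpow : 2 ^ (k + 1) = 2 ^ k + 2 ^ k := by ring
    rw [hpow] at hs hp ⊢
    obtain ⟨S, hS⟩ := hX.1 (p 0) (p (2 ^ k))
    obtain ⟨T, hT⟩ := hX.1 (p (2 ^ k)) (p (2 ^ k + 2 ^ k))
    obtain ⟨u, hu, hzu⟩ := hX.2 _ _ _ s T S hs hT.symm hS.symm z hz
    have hnear : ∀ i, dist u (p i) ≤ k * δ + r → dist z (p i) ≤ (k + 1 : ℕ) * δ + r := by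
      intro i hi
      push_cast
      linarith [dist_triangle z u (p i)]
    rcases hu with hu | hu
    · obtain ⟨i, hi, hui⟩ := ih (fun i => p (2 ^ k + i)) (fun i hi => hp _ (by omega)) hT hu
      exact ⟨2 ^ k + i, by omega, hnear _ hui⟩
    · obtain ⟨i, hi, hui⟩ := ih p (fun i hi => hp i (by omega)) hS hu
      exact ⟨i, by omega, hnear i hui⟩

section LogarithmicScale

variable {f : ℝ → X} {a b lam c D : ℝ} {k : ℕ}

theorem subset_thickening_of_quasiGeodesicOn {s : Set X} (hX : DeltaHyperbolic X δ)
    (hf : QuasiGeodesicOn f (Icc a b) lam c) (hlam : 0 ≤ lam) (hab : a ≤ b)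
    (hk : b - a ≤ 2 ^ k) (hD : k * δ + (lam + c) < D) (hs : IsGeodesicSegment (f a) (f b) s) :
    s ⊆ Metric.thickening D (f '' Icc a b) := by
  intro z hz
  set h : ℝ := (b - a) / 2 ^ k with hh
  have hh0 : 0 ≤ h := div_nonneg (sub_nonneg.2 hab) (by positivity)
  have hh1 : h ≤ 1 := div_le_one_of_le₀ hk (by positivity)
  have hb : b = a + (2 ^ k : ℕ) * h := by
    rw [hh, Nat.cast_pow, Nat.cast_ofNat, mul_div_cancel₀ _ (by positivity), add_sub_cancel]
  rw [hb] at hf hs ⊢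
  have hstep : ∀ i : ℕ, i < 2 ^ k → dist (f (a + i * h)) (f (a + (i + 1 : ℕ) * h)) ≤
      lam + c := by
    intro i hi
    have := ((hf.localQuasiGeodesicOn 1).dist_step hh0 hh1 hi).2
    linarith [mul_le_of_le_one_right hlam hh1]
  obtain ⟨i, hi, hzi⟩ := hX.exists_dist_le_of_path k (fun i : ℕ => f (a + i * h)) hstep
    (by simpa only [Nat.cast_zero, zero_mul, add_zero] using hs) hz
  have hmem : a + i * h ∈ Icc a (a + (2 ^ k : ℕ) * h) :=
    Icc_add_natCast_mul_subset a hh0 i hi (left_mem_Icc.2 le_rfl)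
  exact Metric.mem_thickening_iff.2 ⟨_, ⟨_, hmem, rfl⟩, hzi.trans_lt hD⟩

theorem gromovProduct_le_of_quasiGeodesicOn {t : ℝ} (hX : DeltaHyperbolic X δ)
    (hf : QuasiGeodesicOn f (Icc a b) lam c) (hlam : 0 < lam) (ht : t ∈ Icc a b)
    (hk : b - a ≤ 2 ^ k) (hD : k * δ + (lam + c) < D) :
    gromovProduct (f a) (f b) (f t) ≤ quasiGeodesicDeviation lam c D := by
  obtain ⟨s, hs⟩ := hX.1 (f a) (f b)
  have hcover :=
    hX.subset_thickening_of_quasiGeodesicOn hf hlam.le (ht.1.trans ht.2) hk hD hs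
  obtain ⟨z, hz, hzt⟩ := hf.exists_dist_le_of_subset_thickening hlam hs hcover ht
  exact (hs.gromovProduct_le_dist hz _).trans hzt

end LogarithmicScale

section BrokenGeodesic

variable {x : ℕ → X} {m : ℕ} {K ℓ : ℝ}

theorem gromovProduct_le_of_brokenGeodesic (hX : DeltaHyperbolic X δ) (hK : 0 ≤ K) (hℓ : 0 < ℓ)
    (hlong : ∀ n < m, 2 * K + 6 * δ + ℓ ≤ dist (x n) (x (n + 1)))
    (hturn : ∀ n, n + 1 < m → gromovProduct (x n) (x (n + 2)) (x (n + 1)) ≤ K)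
    {n : ℕ} (hn : n < m) : gromovProduct (x 0) (x (n + 1)) (x n) ≤ K + 3 * δ := by
  induction n with
  | zero =>
    have : Nonempty X := ⟨x 0⟩
    rw [gromovProduct_self_left]
    linarith [hX.nonneg]
  | succ n ih =>
    -- `x n` is far and the path hardly turns there, so the product of `x 0` and `x n` based at
    -- `x (n + 1)` is large; the four-point inequality then bounds the other product.
    have hsum := gromovProduct_add_gromovProduct (x 0) (x n) (x (n + 1))
    have hback := ih (Nat.lt_of_succ_lt hn)
    have hlen := hlong n (Nat.lt_of_succ_lt hn)
    have hmin := (hX.min_gromovProduct_le (x n) (x 0) (x (n + 2)) (x (n + 1))).trans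
      (add_le_add_left (hturn n hn) _)
    refine (min_le_iff.1 hmin).resolve_left (not_le.2 ?_)
    rw [gromovProduct_comm]
    linarith

theorem mul_le_dist_of_brokenGeodesic (hX : DeltaHyperbolic X δ) (hK : 0 ≤ K) (hℓ : 0 < ℓ)
    (hlong : ∀ n < m, 2 * K + 6 * δ + ℓ ≤ dist (x n) (x (n + 1)))
    (hturn : ∀ n, n + 1 < m → gromovProduct (x n) (x (n + 2)) (x (n + 1)) ≤ K) :
    m * ℓ ≤ dist (x 0) (x m) := by
  suffices ∀ n ≤ m, n * ℓ ≤ dist (x 0) (x n) from this m le_rfl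
  intro n hn
  induction n with
  | zero => simp
  | succ n ih =>
    have hprod := hX.gromovProduct_le_of_brokenGeodesic hK hℓ hlong hturn hn
    rw [dist_eq_add_sub_gromovProduct (x 0) (x n)]
    push_cast
    linarith [ih (Nat.le_of_succ_le hn), hlong n hn]

end BrokenGeodesic

section LocalToGlobal

variable {f : ℝ → X} {a b h lam c D ℓ N : ℝ} {k m : ℕ}

theorem mul_le_dist_of_localQuasiGeodesicOn (hX : DeltaHyperbolic X δ)
    (hf : LocalQuasiGeodesicOn f (Icc a (a + m * h)) (2 * h) lam c) (hlam : 0 < lam) (hc : 0 ≤ c)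
    (hh : 0 ≤ h) (hk : 2 * h ≤ 2 ^ k) (hD : k * δ + (lam + c) < D) (hℓ : 0 < ℓ)
    (hlong : 2 * quasiGeodesicDeviation lam c D + 6 * δ + ℓ ≤ lam⁻¹ * h - c) :
    m * ℓ ≤ dist (f a) (f (a + m * h)) := by
  have : Nonempty X := ⟨f a⟩
  have hδ := hX.nonneg
  have hturn : ∀ n : ℕ, n + 1 < m →
      gromovProduct (f (a + n * h)) (f (a + (n + 2 : ℕ) * h)) (f (a + (n + 1 : ℕ) * h)) ≤
        quasiGeodesicDeviation lam c D := by
    intro n hn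
    have hlen : a + (n + 2 : ℕ) * h - (a + n * h) = 2 * h := by push_cast; ring
    have hpiece := hf.quasiGeodesicOn_Icc (Icc_add_natCast_mul_subset a hh n hn) hlen.le
    refine hX.gromovProduct_le_of_quasiGeodesicOn hpiece hlam ?_ (hlen.trans_le hk) hD
    constructor <;> gcongr <;> simp
  have hK : 0 ≤ quasiGeodesicDeviation lam c D :=
    quasiGeodesicDeviation_nonneg hlam.le hc (le_trans (by positivity) hD.le)
  simpa only [Nat.cast_zero, zero_mul, add_zero] using
    hX.mul_le_dist_of_brokenGeodesic (x := fun n => f (a + n * h)) hK hℓ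
      (fun n hn => hlong.trans (hf.dist_step hh (by linarith) hn).1) hturn

theorem min_mul_sub_le_dist_of_localQuasiGeodesicOn (hX : DeltaHyperbolic X δ)
    (hf : LocalQuasiGeodesicOn f (Icc a b) (4 * N) lam c) (hlam : 0 < lam) (hc : 0 ≤ c)
    (hab : a ≤ b) (hN : 0 < N) (hk : 4 * N ≤ 2 ^ k) (hD : k * δ + (lam + c) < D) (hℓ : 0 < ℓ)
    (hlong : 2 * quasiGeodesicDeviation lam c D + 6 * δ + ℓ ≤ lam⁻¹ * N - c) :
    min lam⁻¹ (ℓ / (2 * N)) * (b - a) - c ≤ dist (f a) (f b) := by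
  rcases le_or_gt N (b - a) with hNL | hLN
  · -- Two consecutive pieces of length `h ≤ 2 * N` fit into the scale `4 * N`.
    obtain ⟨m, h, hNh, hhN, hmh⟩ := exists_natCast_mul_eq_of_le hN hNL
    obtain rfl : b = a + m * h := by rw [hmh, add_sub_cancel]
    have hh0 : 0 ≤ h := hN.le.trans hNh
    have hlong' : 2 * quasiGeodesicDeviation lam c D + 6 * δ + ℓ ≤ lam⁻¹ * h - c :=
      hlong.trans (by gcongr)
    calc min lam⁻¹ (ℓ / (2 * N)) * (a + m * h - a) - c
        ≤ ℓ / (2 * N) * (m * (2 * N)) - 0 := by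
          rw [add_sub_cancel_left]
          gcongr
          exact min_le_right _ _
      _ = m * ℓ := by rw [sub_zero]; field_simp
      _ ≤ dist (f a) (f (a + m * h)) :=
        hX.mul_le_dist_of_localQuasiGeodesicOn (hf.mono subset_rfl (by linarith)) hlam hc
          hh0 (by linarith) hD hℓ hlong'
  · calc min lam⁻¹ (ℓ / (2 * N)) * (b - a) - c ≤ lam⁻¹ * (b - a) - c := by
          gcongr
          exact min_le_left _ _
      _ ≤ dist (f a) (f b) :=
        (quasiGeodesicOn_iff.1 (hf.quasiGeodesicOn_Icc subset_rfl (by linarith))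
          a (left_mem_Icc.2 hab) b (right_mem_Icc.2 hab) hab).1

end LocalToGlobal

end DeltaHyperbolic

theorem exists_mul_add_le_pow {r : ℝ} (hr : 1 < r) (A B : ℝ) : ∃ k : ℕ, A * k + B ≤ r ^ k := by
  have hlin : (fun k : ℕ => A * (k : ℝ) + B) =o[Filter.atTop] fun k => r ^ k := by
    simpa only [pow_one, pow_zero, mul_one] using
      ((isLittleO_pow_const_const_pow_of_one_lt 1 hr).const_mul_left A).add
        ((isLittleO_pow_const_const_pow_of_one_lt 0 hr).const_mul_left B)
  obtain ⟨k, hk⟩ := (hlin.bound one_pos).exists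
  refine ⟨k, (le_abs_self _).trans ?_⟩
  simpa [abs_of_pos (zero_lt_one.trans hr)] using hk

theorem exists_quasiGeodesicDeviation_le_two_pow (δ c : ℝ) {lam : ℝ} (hlam : 0 < lam) (n : ℕ) :
    ∃ k : ℕ, 2 * quasiGeodesicDeviation lam c ((k + n : ℕ) * δ + (lam + c) + 1) + 6 * δ + 1 ≤
      lam⁻¹ * 2 ^ k - c := by
  obtain ⟨k, hk⟩ := exists_mul_add_le_pow one_lt_two (lam * (2 * (δ + lam * (lam * (2 * δ)))))
    (lam * (2 * quasiGeodesicDeviation lam c (n * δ + (lam + c) + 1) + 6 * δ + 1 + c))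
  refine ⟨k, ?_⟩
  rw [le_sub_iff_add_le, le_inv_mul_iff₀ hlam]
  refine le_of_eq_of_le ?_ hk
  rw [quasiGeodesicDeviation, quasiGeodesicDeviation, Nat.cast_add]
  ring

theorem exists_quasiGeodesicOn_of_localQuasiGeodesicOn (δ : ℝ) {lam c : ℝ} (hlam : 0 < lam)
    (hc : 0 ≤ c) :
    ∃ M lam' : ℝ, 0 ≤ M ∧ 1 ≤ lam' ∧ ∀ (X : Type) [MetricSpace X], DeltaHyperbolic X δ →
      ∀ (f : ℝ → X) (a b : ℝ), LocalQuasiGeodesicOn f (Icc a b) M lam c →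
        QuasiGeodesicOn f (Icc a b) lam' c := by
  obtain ⟨k, hk⟩ := exists_quasiGeodesicDeviation_le_two_pow δ c hlam 2
  set N : ℝ := 2 ^ k with hN
  have hN1 : 1 ≤ N := one_le_pow₀ one_le_two
  refine ⟨4 * N, lam + c + 2 * N, by positivity, by linarith, ?_⟩
  intro X _ hX f a b hf
  rw [quasiGeodesicOn_iff]
  intro t ht t' ht' htt'
  have hf' : LocalQuasiGeodesicOn f (Icc t t') (4 * N) lam c :=
    hf.mono (Icc_subset_Icc ht.1 ht'.2) le_rfl
  constructor
  · have hrate : (lam + c + 2 * N)⁻¹ ≤ min lam⁻¹ (1 / (2 * N)) := by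
      rw [one_div, le_min_iff]
      constructor <;> gcongr <;> linarith
    calc (lam + c + 2 * N)⁻¹ * (t' - t) - c ≤ min lam⁻¹ (1 / (2 * N)) * (t' - t) - c := by
          gcongr
      _ ≤ dist (f t) (f t') :=
        hX.min_mul_sub_le_dist_of_localQuasiGeodesicOn hf' hlam hc htt' (by positivity)
          (by rw [hN, pow_add]; linarith) (lt_add_one _) one_pos hk
  · have hpieces : (⌊(t' - t) / (4 * N)⌋₊ : ℝ) ≤ t' - t :=
      (Nat.floor_le (div_nonneg (sub_nonneg.2 htt') (by positivity))).trans
        (div_le_self (sub_nonneg.2 htt') (by linarith))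
    calc dist (f t) (f t') ≤ lam * (t' - t) + (⌊(t' - t) / (4 * N)⌋₊ + 1) * c :=
          hf'.dist_le htt' (by positivity)
      _ ≤ lam * (t' - t) + ((t' - t) + 1) * c := by gcongr
      _ ≤ (lam + c + 2 * N) * (t' - t) + c := by
        linarith [mul_nonneg (sub_nonneg.2 htt') (zero_le_one.trans hN1)]

/-- `q` is an `(M, lam, c)`-local-quasi-isometric embedding: its restriction to every closed ball
of radius `M` is a `(lam, c)`-quasi-isometric embedding. -/
def LocalQIEmbedding {Y X : Type*} [PseudoMetricSpace Y] [PseudoMetricSpace X] (q : Y → X)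
    (M lam c : ℝ) : Prop :=
  ∀ y : Y, ∀ y₁ ∈ Metric.closedBall y M, ∀ y₂ ∈ Metric.closedBall y M,
    lam⁻¹ * dist y₁ y₂ - c ≤ dist (q y₁) (q y₂) ∧ dist (q y₁) (q y₂) ≤ lam * dist y₁ y₂ + c

theorem LocalQIEmbedding.localQuasiGeodesicOn_comp {X : Type} {Y : Type*} [MetricSpace X]
    [PseudoMetricSpace Y] {q : Y → X} {γ : ℝ → Y} {I : Set ℝ} {M lam c : ℝ}
    (hq : LocalQIEmbedding q M lam c)
    (hγ : ∀ t ∈ I, ∀ t' ∈ I, dist (γ t) (γ t') = |t - t'|) :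
    LocalQuasiGeodesicOn (q ∘ γ) I M lam c := by
  rintro a b - - - hab t ⟨htI, ht⟩ u ⟨huI, hu⟩
  have hdist : dist (γ u) (γ t) ≤ M := by
    rw [hγ u huI t htI]
    exact (abs_sub_le_of_le_of_le hu.1 hu.2 ht.1 ht.2).trans hab
  rw [← hγ t htI u huI]
  exact hq (γ t) (γ t) (Metric.mem_closedBall_self (dist_nonneg.trans hdist)) (γ u) hdist

/-- a map from a geodesic space to a `δ`-hyperbolic geodesic space whose
restriction to every ball of radius `M ≥ M₁(δ,λ,c)` is a `(λ,c)`-quasi-isometric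
embedding is a global `(λ',c')`-quasi-isometric embedding, with `λ', c'` depending
only on `δ, λ, c`. -/
theorem local_to_global_quasi_isometric_embedding
    (δ lam c : ℝ) (hδ : 0 ≤ δ) (hlam : 1 ≤ lam) (hc : 0 ≤ c) :
    ∃ M₁ lam' c' : ℝ, 0 ≤ M₁ ∧ 1 ≤ lam' ∧ 0 ≤ c' ∧
      ∀ (X Y : Type) [MetricSpace X] [MetricSpace Y],
        DeltaHyperbolic X δ → GeodesicSpace Y →
        ∀ (M : ℝ) (q : Y → X), M₁ ≤ M →
          (∀ y : Y, ∀ y₁ ∈ Metric.closedBall y M, ∀ y₂ ∈ Metric.closedBall y M,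
            lam⁻¹ * dist y₁ y₂ - c ≤ dist (q y₁) (q y₂) ∧
            dist (q y₁) (q y₂) ≤ lam * dist y₁ y₂ + c) →
          QIEmbedding q lam' c' := by
  obtain ⟨M₁, lam', hM₁, hlam', hglobal⟩ :=
    exists_quasiGeodesicOn_of_localQuasiGeodesicOn δ (zero_lt_one.trans_le hlam) hc
  refine ⟨M₁, lam', c, hM₁, hlam', hc, ?_⟩
  intro X Y _ _ hX hY M q hM hq y₁ y₂
  obtain ⟨-, γ, hγ0, hγ1, hγ, -⟩ := hY y₁ y₂
  have hlocal : LocalQuasiGeodesicOn (q ∘ γ) (Icc 0 (dist y₁ y₂)) M₁ lam c :=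
    (LocalQIEmbedding.localQuasiGeodesicOn_comp hq hγ).mono subset_rfl hM
  have hends := quasiGeodesicOn_iff.1 (hglobal X hX _ _ _ hlocal)
    0 (left_mem_Icc.2 dist_nonneg) (dist y₁ y₂) (right_mem_Icc.2 dist_nonneg) dist_nonneg
  simpa only [Function.comp_apply, hγ0, hγ1, sub_zero] using hends
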